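/- Let τ > 0. For every f ∈ H¹₊ with f̂(τ) = 0 and every ε > 0 there exists g ∈ L¹(ℝ,ℂ) with ‖f − g‖_{L¹} < ε such that ĝ is a smooth function with compact support, supp ĝ ⊆ [0,∞), and dist(supp ĝ, {0, τ}) > 0. In other words, the space H¹_{{0,τ},0} of L¹ functions whose Fourier transform is smooth, compactly supported in [0,∞) and supported at positive distance from {0,τ} is dense in H¹_{{τ}} := {f ∈ H¹₊ : f̂(τ) = 0} for the L¹ norm. -/

import Mathlib

/-!
Let `K` be a Schwartz function with `K̂ = 1` on `[-1, 1]` and `K̂ = 0` off `(-2, 2)`, and write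
`K_δ = δ⁻¹ K(·/δ)`. The function `f * K_δ` tends to `f` in `L¹` as `δ → 0`, and its
Fourier transform `K̂(δξ) f̂(ξ)` vanishes for large `ξ`. The part of `f` with frequencies of size `O(δ)` is
`f * (δ K(δ ·))`, with transform `K̂(ξ/δ) f̂(ξ)`. By a change of scale its `L¹` norm is that of the
convolution of `K` with the dilate `δ⁻¹ f(·/δ)`, which tends to `(∫ f) K`; this is `0` because
`∫ f = f̂(0)` vanishes, `f̂` being continuous and zero on `(-∞, 0)`. After modulation the same applies
near `τ`, because `f̂(τ) = 0`. Hence subtracting from `f * K_δ` the parts near `0` and near `τ` gives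
an `L¹`-approximation of `f` whose transform is `f̂(ξ) (K̂(δξ) - K̂(ξ/δ) - K̂((ξ-τ)/δ))`; the bracket
vanishes on `[0, δ]`, on `[τ-δ, τ+δ]` and for large positive `ξ`, and `f̂` vanishes on `(-∞, 0)`
(`tendsto_dilConv`, `tendsto_lowPart`, `exists_cutoff`).

This transform need not be smooth. Multiplying the approximant by `ψ̂(ηx)`, with `ψ` a smooth bump of
mass one, makes all its moments finite, so that its transform becomes smooth; it changes the function
little in `L¹` when `η` is small, and enlarges the Fourier support by at most `η`
(`exists_smooth_FT`).
-/

open MeasureTheory Complex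

/-- The Fourier transform of an integrable function `f : ℝ → ℂ`:
`f̂(ξ) = ∫ f(x) e^{-iξx} dx`. -/
noncomputable def FT (f : ℝ → ℂ) (ξ : ℝ) : ℂ :=
  ∫ x : ℝ, f x * Complex.exp (-Complex.I * ξ * x)

open Filter Topology

/-! ### Approximate identities in `L¹` -/

/-- Translation is continuous in the `L¹` norm. -/
lemma tendsto_translate (f : ℝ → ℂ) (hf : Integrable f) :
    Tendsto (fun s : ℝ => ∫ x, ‖f (x - s) - f x‖) (𝓝 0) (𝓝 0) := by
  have : Fact ((1 : ENNReal) ≠ ⊤) := ⟨ENNReal.one_ne_top⟩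
  set F : Lp ℂ 1 (volume : Measure ℝ) := hf.toL1 f with hF
  have h1 : Continuous fun s : ℝ => (DomAddAct.mk (-s)) +ᵥ F := by
    have : Continuous fun s : ℝ => DomAddAct.mk (-s) := by
      exact DomAddAct.continuous_mk.comp continuous_neg
    exact this.vadd continuous_const
  have h2 : Tendsto (fun s : ℝ => dist ((DomAddAct.mk (-s)) +ᵥ F) F) (𝓝 0) (𝓝 0) := by
    have := (h1.dist (continuous_const (y := F))).tendsto 0
    simpa using this
  refine h2.congr fun s => ?_
  rw [L1.dist_eq_integral_dist]
  refine integral_congr_ae ?_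
  have h3 := DomAddAct.vadd_Lp_ae_eq (DomAddAct.mk (-s)) F
  have h4 : (F : ℝ → ℂ) =ᵐ[volume] f := hf.coeFn_toL1
  have h5 := (measurePreserving_sub_right volume s).quasiMeasurePreserving.ae_eq_comp h4
  filter_upwards [h3, h4, h5] with x h3 h4 h5
  rw [h3, dist_eq_norm, h4]
  have : (DomAddAct.mk.symm (DomAddAct.mk (-s)) +ᵥ x) = x - s := by
    simp [sub_eq_neg_add]
  rw [this]
  simp only [Function.comp] at h5
  rw [h5]

/-- The convolution of `f` with the dilate `δ⁻¹ K(·/δ)` of `K`, written after the change of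
variable `u ↦ δ u` so that it also makes sense for `δ = 0`. -/
noncomputable def dilConv (K f : ℝ → ℂ) (δ x : ℝ) : ℂ := ∫ u : ℝ, K u * f (x - δ * u)

lemma integrable_dilConv_integrand {K f : ℝ → ℂ} (hK : Integrable K) (hf : Integrable f) (δ : ℝ) :
    Integrable (fun p : ℝ × ℝ => K p.1 * f (p.2 - δ * p.1)) (volume.prod volume) := by
  have hq : Measure.QuasiMeasurePreserving (fun p : ℝ × ℝ => p.2 - δ * p.1)
      (volume.prod volume) volume :=
    QuasiMeasurePreserving.prod_of_right (by fun_prop)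
      (Filter.Eventually.of_forall fun u =>
        (measurePreserving_sub_right volume (δ * u)).quasiMeasurePreserving)
  have hm : AEStronglyMeasurable (fun p : ℝ × ℝ => K p.1 * f (p.2 - δ * p.1))
      (volume.prod volume) :=
    hK.aestronglyMeasurable.comp_fst.mul
      (hf.aestronglyMeasurable.comp_quasiMeasurePreserving hq)
  rw [integrable_prod_iff hm]
  refine ⟨Filter.Eventually.of_forall fun u => (hf.comp_sub_right (δ * u)).const_mul (K u), ?_⟩
  simp only [norm_mul, integral_const_mul]
  simp only [integral_sub_right_eq_self (fun y => ‖f y‖)]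
  exact hK.norm.mul_const _

lemma integrable_dilConv {K f : ℝ → ℂ} (hK : Integrable K) (hf : Integrable f) (δ : ℝ) :
    Integrable (dilConv K f δ) :=
  (integrable_dilConv_integrand hK hf δ).integral_prod_right

/-- Dilates of an integrable kernel of arbitrary total mass form an approximate identity, up to the
factor `∫ K`. Since only integrability is assumed, `K` and `f` may exchange roles. -/
lemma tendsto_dilConv {K f : ℝ → ℂ} (hK : Integrable K) (hf : Integrable f) :
    Tendsto (fun δ : ℝ => ∫ x, ‖dilConv K f δ x - (∫ u, K u) * f x‖) (𝓝 0) (𝓝 0) := by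
  have key (δ : ℝ) : Integrable (fun p : ℝ × ℝ => K p.1 * (f (p.2 - δ * p.1) - f p.2))
      (volume.prod volume) := by
    have := (integrable_dilConv_integrand hK hf δ).sub (integrable_dilConv_integrand hK hf 0)
    refine this.congr (Filter.Eventually.of_forall fun p => ?_)
    simp [mul_sub]
  have bound (δ : ℝ) : ∫ x, ‖dilConv K f δ x - (∫ u, K u) * f x‖ ≤
      ∫ u, ‖K u‖ * ∫ x, ‖f (x - δ * u) - f x‖ := by
    have e1 : ∫ u, ‖K u‖ * ∫ x, ‖f (x - δ * u) - f x‖ =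
        ∫ x, ∫ u, ‖K u * (f (x - δ * u) - f x)‖ := by
      rw [← integral_integral_swap (key δ).norm]
      simp [integral_const_mul]
    rw [e1]
    refine integral_mono_ae ((integrable_dilConv hK hf δ).sub (hf.const_mul _)).norm
      (key δ).norm.integral_prod_right ?_
    filter_upwards [(integrable_dilConv_integrand hK hf δ).prod_left_ae] with x hx
    refine le_trans (le_of_eq ?_) (norm_integral_le_integral_norm _)
    rw [dilConv, ← integral_mul_const, ← integral_sub hx (hK.mul_const _)]
    simp [mul_sub]
  refine squeeze_zero (fun δ => integral_nonneg fun x => norm_nonneg _) bound ?_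
  suffices hs : Tendsto (fun δ : ℝ => ∫ u, ‖K u‖ * ∫ x, ‖f (x - δ * u) - f x‖) (𝓝 0)
      (𝓝 (∫ u : ℝ, ‖K u‖ * 0)) by simpa only [mul_zero, integral_zero] using hs
  refine tendsto_integral_filter_of_dominated_convergence
    (fun u => ‖K u‖ * (2 * ∫ x, ‖f x‖)) ?_ ?_ (hK.norm.mul_const _) ?_
  · refine Filter.Eventually.of_forall fun δ => ?_
    have := (key δ).norm.integral_prod_left.aestronglyMeasurable
    simpa [integral_const_mul] using this
  · refine Filter.Eventually.of_forall fun δ => Filter.Eventually.of_forall fun u => ?_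
    have h0 : 0 ≤ ∫ x, ‖f (x - δ * u) - f x‖ := integral_nonneg fun x => norm_nonneg _
    rw [norm_mul, norm_norm, Real.norm_of_nonneg h0]
    refine mul_le_mul_of_nonneg_left ?_ (norm_nonneg _)
    calc ∫ x, ‖f (x - δ * u) - f x‖ ≤ ∫ x, (‖f (x - δ * u)‖ + ‖f x‖) :=
          integral_mono ((hf.comp_sub_right _).sub hf).norm
            ((hf.comp_sub_right _).norm.add hf.norm) fun x => norm_sub_le _ _
      _ = 2 * ∫ x, ‖f x‖ := by
          rw [integral_add (hf.comp_sub_right _).norm hf.norm,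
            integral_sub_right_eq_self (fun y => ‖f y‖)]
          ring
  · refine Filter.Eventually.of_forall fun u => ?_
    have h1 : Tendsto (fun δ : ℝ => δ * u) (𝓝 0) (𝓝 0) := by
      simpa only [zero_mul] using (continuous_mul_const u).tendsto (0 : ℝ)
    exact ((tendsto_translate f hf).comp h1).const_mul _

/-! ### Fourier transforms of the two convolutions -/

lemma integrable_FT_integrand {f : ℝ → ℂ} (hf : Integrable f) (ξ : ℝ) :
    Integrable fun x : ℝ => f x * Complex.exp (-Complex.I * ξ * x) := by
  refine hf.mul_bdd (c := 1) (by fun_prop) (Filter.Eventually.of_forall fun x => ?_)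
  rw [show -Complex.I * ξ * x = ((-(ξ * x) : ℝ) : ℂ) * Complex.I by push_cast; ring,
    Complex.norm_exp_ofReal_mul_I]

lemma FT_dilConv {K f : ℝ → ℂ} (hK : Integrable K) (hf : Integrable f) (δ ξ : ℝ) :
    FT (dilConv K f δ) ξ = FT K (δ * ξ) * FT f ξ := by
  have hI : Integrable (fun p : ℝ × ℝ => K p.1 * f (p.2 - δ * p.1) *
      Complex.exp (-Complex.I * ξ * p.2)) (volume.prod volume) := by
    refine (integrable_dilConv_integrand hK hf δ).mul_bdd (c := 1) (by fun_prop)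
      (Filter.Eventually.of_forall fun p => ?_)
    rw [show -Complex.I * ξ * p.2 = ((-(ξ * p.2) : ℝ) : ℂ) * Complex.I by push_cast; ring,
      Complex.norm_exp_ofReal_mul_I]
  unfold FT dilConv
  simp_rw [← integral_mul_const]
  rw [← integral_integral_swap hI]
  congr 1
  ext u
  rw [← integral_const_mul,
    ← integral_sub_right_eq_self (fun x => K u * Complex.exp (-Complex.I * (δ * ξ : ℝ) * u) *
      (f x * Complex.exp (-Complex.I * ξ * x))) (δ * u)]
  congr 1
  ext x
  have : Complex.exp (-Complex.I * ξ * x) = Complex.exp (-Complex.I * (δ * ξ : ℝ) * u) *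
      Complex.exp (-Complex.I * ξ * (x - δ * u : ℝ)) := by
    rw [← Complex.exp_add]; push_cast; ring_nf
  rw [this]; ring

/-- The convolution of `h` with the wide kernel `δ K(δ ·)`, which retains the frequencies of `h` of
size `O(δ)`. It is encoded as the `L¹`-normalised dilate of `dilConv h K δ`, in which `h` plays the
role of the kernel. -/
noncomputable def lowPart (K h : ℝ → ℂ) (δ x : ℝ) : ℂ := δ * dilConv h K δ (δ * x)

lemma integrable_lowPart {K h : ℝ → ℂ} (hK : Integrable K) (hh : Integrable h) {δ : ℝ}
    (hδ : 0 < δ) : Integrable (lowPart K h δ) :=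
  ((integrable_dilConv hh hK δ).comp_mul_left' hδ.ne').const_mul _

lemma FT_lowPart {K h : ℝ → ℂ} (hK : Integrable K) (hh : Integrable h) {δ : ℝ} (hδ : 0 < δ)
    (ξ : ℝ) : FT (lowPart K h δ) ξ = FT K (ξ / δ) * FT h ξ := by
  have h1 : FT (lowPart K h δ) ξ = FT (dilConv h K δ) (ξ / δ) := by
    unfold FT lowPart
    have := Measure.integral_comp_mul_left
      (fun y : ℝ => δ * (dilConv h K δ y * Complex.exp (-Complex.I * (ξ / δ : ℝ) * y))) δ
    have h2 : (δ : ℂ) ≠ 0 := by exact_mod_cast hδ.ne'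
    rw [abs_of_pos (inv_pos.2 hδ), Complex.real_smul, integral_const_mul, integral_const_mul,
      Complex.ofReal_inv, inv_mul_cancel_left₀ h2] at this
    rw [← this, ← integral_const_mul]
    congr 1; ext x
    push_cast
    rw [show -Complex.I * (ξ / δ) * (δ * x) = -Complex.I * ξ * x by field_simp]
    ring
  rw [h1, FT_dilConv hh hK, mul_div_cancel₀ _ hδ.ne', mul_comm]

/-- If `h` has mean zero, its convolution with a wide `L¹`-normalised kernel tends to `0`: by
scaling, its norm is that of `dilConv h K δ`, which tends to `(∫ h) K = 0`. -/
lemma tendsto_lowPart {K h : ℝ → ℂ} (hK : Integrable K) (hh : Integrable h)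
    (h0 : FT h 0 = 0) :
    Tendsto (fun δ : ℝ => ∫ x, ‖lowPart K h δ x‖) (𝓝[>] 0) (𝓝 0) := by
  have hz : ∫ u, h u = 0 := by simpa [FT] using h0
  have := (tendsto_dilConv hh hK).mono_left (nhdsWithin_le_nhds (s := Set.Ioi 0))
  simp only [hz, zero_mul, sub_zero] at this
  refine this.congr' ?_
  filter_upwards [self_mem_nhdsWithin] with δ hδ
  have hδ : 0 < δ := hδ
  have e := Measure.integral_comp_mul_left (fun y : ℝ => δ * ‖dilConv h K δ y‖) δ
  rw [abs_of_pos (inv_pos.2 hδ), smul_eq_mul, integral_const_mul, integral_const_mul,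
    inv_mul_cancel_left₀ hδ.ne'] at e
  rw [← e, ← integral_const_mul]
  congr 1; ext x
  simp [lowPart, abs_of_pos hδ]

lemma FT_eq_fourier (f : ℝ → ℂ) (ξ : ℝ) :
    FT f ξ = FourierTransform.fourier f (ξ / (2 * Real.pi)) := by
  rw [Real.fourier_real_eq_integral_exp_smul, FT]
  congr 1; ext x
  rw [smul_eq_mul, mul_comm]
  congr 2
  have : (Real.pi : ℂ) ≠ 0 := by exact_mod_cast Real.pi_ne_zero
  push_cast
  field_simp

lemma continuous_FT {f : ℝ → ℂ} (hf : Integrable f) : Continuous (FT f) := by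
  unfold FT
  refine continuous_of_dominated (bound := fun x => ‖f x‖)
    (fun ξ => (integrable_FT_integrand hf ξ).aestronglyMeasurable)
    (fun ξ => Filter.Eventually.of_forall fun x => ?_) hf.norm
    (Filter.Eventually.of_forall fun x => by fun_prop)
  rw [norm_mul, show -Complex.I * ξ * x = ((-(ξ * x) : ℝ) : ℂ) * Complex.I by push_cast; ring,
    Complex.norm_exp_ofReal_mul_I, mul_one]

/-! ### Smooth cutoffs and smoothing of the Fourier transform -/

/-- An integrable kernel whose Fourier transform is a plateau function: `1` on `[-1, 1]` and `0`
off `(-2, 2)`. -/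
lemma exists_kernel : ∃ K : ℝ → ℂ, Integrable K ∧ (∀ ξ : ℝ, |ξ| ≤ 1 → FT K ξ = 1) ∧
    ∀ ξ : ℝ, 2 ≤ |ξ| → FT K ξ = 0 := by
  let b : ContDiffBump (0 : ℝ) := ⟨1, 2, one_pos, one_lt_two⟩
  -- the factor `2π` absorbs the normalisation of the Fourier transform of Mathlib
  let φ : ℝ → ℂ := fun t => (b (2 * Real.pi * t) : ℂ)
  have hc : HasCompactSupport φ := by
    have h1 : HasCompactSupport fun t : ℝ => b (2 * Real.pi * t) :=
      b.hasCompactSupport.comp_homeomorph (Homeomorph.mulLeft₀ (2 * Real.pi) (by positivity))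
    exact h1.comp_left (g := fun r : ℝ => (r : ℂ)) Complex.ofReal_zero
  have hd : ContDiff ℝ (⊤ : ℕ∞) φ :=
    Complex.ofRealCLM.contDiff.comp (b.contDiff.comp (contDiff_const.mul contDiff_id))
  let Φ : SchwartzMap ℝ ℂ := hc.toSchwartzMap hd
  let K : SchwartzMap ℝ ℂ := FourierTransformInv.fourierInv Φ
  have hK (ξ : ℝ) : FT K ξ = (b ξ : ℂ) := by
    rw [FT_eq_fourier, ← SchwartzMap.fourier_coe, FourierTransform.fourier_fourierInv_eq]
    change ((b (2 * Real.pi * (ξ / (2 * Real.pi))) : ℝ) : ℂ) = _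
    rw [mul_div_cancel₀ _ (by positivity)]
  refine ⟨K, K.integrable, fun ξ h => ?_, fun ξ h => ?_⟩
  · rw [hK, b.one_of_mem_closedBall (by simpa using h), Complex.ofReal_one]
  · rw [hK, b.zero_of_le_dist (by simpa using h), Complex.ofReal_zero]

/-- Multiplying `g` by the Fourier transform of `ψ` amounts, on the Fourier side, to averaging the
translates of `FT g` against `ψ`. -/
lemma FT_mul_FT {g ψ : ℝ → ℂ} (hg : Integrable g) (hψ : Integrable ψ) (η ξ : ℝ) :
    FT (fun x => g x * FT ψ (η * x)) ξ = ∫ t : ℝ, ψ t * FT g (ξ + η * t) := by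
  have hI : Integrable (fun p : ℝ × ℝ => ψ p.1 * g p.2 *
      Complex.exp (-Complex.I * (ξ + η * p.1 : ℝ) * p.2)) (volume.prod volume) := by
    refine (hψ.mul_prod hg).mul_bdd (c := 1) (by fun_prop)
      (Filter.Eventually.of_forall fun p => ?_)
    rw [show -Complex.I * (ξ + η * p.1 : ℝ) * p.2 =
      ((-((ξ + η * p.1) * p.2) : ℝ) : ℂ) * Complex.I by push_cast; ring,
      Complex.norm_exp_ofReal_mul_I]
  unfold FT
  simp_rw [← integral_const_mul, ← integral_mul_const]
  have := integral_integral_swap (f := fun t x : ℝ => ψ t * g x *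
    Complex.exp (-Complex.I * (ξ + η * t : ℝ) * x)) hI
  simp only [mul_assoc] at this ⊢
  rw [this]
  congr 1; ext x; congr 1; ext t
  have : Complex.exp (-(Complex.I * ((ξ + η * t : ℝ) * x))) =
      Complex.exp (-(Complex.I * ((η * x : ℝ) * t))) * Complex.exp (-(Complex.I * (ξ * x))) := by
    rw [← Complex.exp_add]; push_cast; ring_nf
  simp only [neg_mul]
  rw [this]; ring

/-- A smooth mass-one bump supported in `[-1, 1]`; its Fourier transform is a Schwartz function. -/
lemma exists_mollifier : ∃ (ψ : ℝ → ℂ) (θ : SchwartzMap ℝ ℂ), Integrable ψ ∧ FT ψ 0 = 1 ∧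
    (∀ t : ℝ, 1 < |t| → ψ t = 0) ∧ ∀ x, FT ψ (2 * Real.pi * x) = θ x := by
  let b : ContDiffBump (0 : ℝ) := ⟨1 / 2, 1, by norm_num, by norm_num⟩
  let ψ : ℝ → ℂ := fun t => (b.normed volume t : ℂ)
  have hc : HasCompactSupport ψ :=
    b.hasCompactSupport_normed.comp_left (g := fun r : ℝ => (r : ℂ)) Complex.ofReal_zero
  have hd : ContDiff ℝ (⊤ : ℕ∞) ψ := Complex.ofRealCLM.contDiff.comp b.contDiff_normed
  let Ψ : SchwartzMap ℝ ℂ := hc.toSchwartzMap hd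
  refine ⟨ψ, FourierTransform.fourier Ψ, b.integrable_normed.ofReal, ?_, fun t ht => ?_, fun x => ?_⟩
  · simp only [FT, Complex.ofReal_zero, mul_zero, zero_mul, Complex.exp_zero, mul_one, ψ]
    rw [integral_complex_ofReal, b.integral_normed, Complex.ofReal_one]
  · have : b t = 0 := b.zero_of_le_dist (by simpa using ht.le)
    simp [ψ, ContDiffBump.normed_def, this]
  · rw [FT_eq_fourier, SchwartzMap.fourier_coe, mul_div_cancel_left₀ _ (by positivity)]
    rfl

/-- An integrable function can be approximated in `L¹` by functions with smooth Fourier transform,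
with an arbitrarily small enlargement of the Fourier support. -/
lemma exists_smooth_FT {g : ℝ → ℂ} (hg : Integrable g) {ε r : ℝ} (hε : 0 < ε) (hr : 0 < r) :
    ∃ k : ℝ → ℂ, Integrable k ∧ ContDiff ℝ (⊤ : ℕ∞) (FT k) ∧ (∫ x, ‖g x - k x‖) < ε ∧
      ∀ ξ, (∀ s, |s - ξ| ≤ r → FT g s = 0) → FT k ξ = 0 := by
  obtain ⟨ψ, θ, hψ, hψ0, hψs, hθ⟩ := exists_mollifier
  have hcψ := continuous_FT hψ
  have hbd (y : ℝ) : ‖FT ψ y‖ ≤ ∫ t, ‖ψ t‖ := by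
    refine (norm_integral_le_integral_norm _).trans (le_of_eq ?_)
    congr 1; ext t
    rw [norm_mul, show -Complex.I * y * t = ((-(y * t) : ℝ) : ℂ) * Complex.I by push_cast; ring,
      Complex.norm_exp_ofReal_mul_I, mul_one]
  have hint (η : ℝ) : Integrable fun x => g x * FT ψ (η * x) :=
    hg.mul_bdd (by exact (hcψ.comp (continuous_const_mul η)).aestronglyMeasurable)
      (Filter.Eventually.of_forall fun x => hbd (η * x))
  have hlim : Tendsto (fun η : ℝ => ∫ x, ‖g x - g x * FT ψ (η * x)‖) (𝓝[>] 0) (𝓝 0) := by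
    suffices hs : Tendsto (fun η : ℝ => ∫ x, ‖g x - g x * FT ψ (η * x)‖) (𝓝[>] 0)
        (𝓝 (∫ _ : ℝ, (0 : ℝ))) by simpa only [integral_zero] using hs
    refine tendsto_integral_filter_of_dominated_convergence
      (fun x => ‖g x‖ + ‖g x‖ * ∫ t, ‖ψ t‖)
      (Filter.Eventually.of_forall fun η => (hg.sub (hint η)).norm.aestronglyMeasurable)
      (Filter.Eventually.of_forall fun η => Filter.Eventually.of_forall fun x => ?_)
      (hg.norm.add (hg.norm.mul_const _)) (Filter.Eventually.of_forall fun x => ?_)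
    · rw [norm_norm]
      refine (norm_sub_le _ _).trans ?_
      rw [norm_mul]
      gcongr
      exact hbd _
    · have hc : Continuous fun η : ℝ => ‖g x - g x * FT ψ (η * x)‖ := by fun_prop
      have := (hc.tendsto 0).mono_left (nhdsWithin_le_nhds (s := Set.Ioi 0))
      simpa [hψ0] using this
  obtain ⟨η, hη, hη0, hηr⟩ := ((hlim.eventually (gt_mem_nhds hε)).and
    (Ioo_mem_nhdsGT hr)).exists
  refine ⟨fun x => g x * FT ψ (η * x), hint η, ?_, hη, fun ξ h => ?_⟩
  · -- rapid decay of the factor makes all moments of the product finite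
    have hsm : ContDiff ℝ (⊤ : ℕ∞)
        (FourierTransform.fourier fun x => g x * FT ψ (η * x)) := by
      refine Real.contDiff_fourier fun n _ => ?_
      obtain ⟨C, -, hC⟩ := θ.decay n 0
      have hC' (x : ℝ) : ‖x‖ ^ n * ‖FT ψ (η * x)‖ ≤ (2 * Real.pi / η) ^ n * C := by
        have h1 := hC (η * x / (2 * Real.pi))
        rw [norm_iteratedFDeriv_zero, ← hθ, mul_div_cancel₀ _ (by positivity)] at h1
        have h2 : ‖x‖ = 2 * Real.pi / η * ‖η * x / (2 * Real.pi)‖ := by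
          rw [norm_div, norm_mul, Real.norm_of_nonneg hη0.le,
            Real.norm_of_nonneg (by positivity : 0 ≤ 2 * Real.pi)]
          field_simp
        rw [h2, mul_pow, mul_assoc]
        gcongr
      have h3 : Integrable fun x : ℝ => ‖g x‖ * (‖x‖ ^ n * ‖FT ψ (η * x)‖) := by
        refine hg.norm.mul_bdd (c := (2 * Real.pi / η) ^ n * C)
          (by exact (by fun_prop : Continuous fun x : ℝ =>
            ‖x‖ ^ n * ‖FT ψ (η * x)‖).aestronglyMeasurable)
          (Filter.Eventually.of_forall fun x => ?_)
        rw [Real.norm_of_nonneg (by positivity)]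
        exact hC' x
      refine h3.congr (Filter.Eventually.of_forall fun x => ?_)
      simp only [norm_mul]
      ring
    rw [show FT (fun x => g x * FT ψ (η * x)) = fun ξ => FourierTransform.fourier
      (fun x => g x * FT ψ (η * x)) (ξ / (2 * Real.pi)) from funext (FT_eq_fourier _)]
    exact hsm.comp (contDiff_id.div_const _)
  · rw [FT_mul_FT hg hψ]
    refine integral_eq_zero_of_ae (Filter.Eventually.of_forall fun t => ?_)
    rcases lt_or_ge 1 |t| with ht | ht
    · simp [hψs t ht]
    · have : FT g (ξ + η * t) = 0 := h _ (by
        rw [add_sub_cancel_left, abs_mul, abs_of_pos hη0]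
        nlinarith)
      simp [this]

/-! ### Removal of the frequencies near `0`, `τ` and infinity -/

lemma norm_exp_I_mul (τ x : ℝ) : ‖Complex.exp (Complex.I * τ * x)‖ = 1 := by
  rw [show Complex.I * τ * x = ((τ * x : ℝ) : ℂ) * Complex.I by push_cast; ring,
    Complex.norm_exp_ofReal_mul_I]

lemma FT_modulate (h : ℝ → ℂ) (τ ξ : ℝ) :
    FT (fun x => h x * Complex.exp (Complex.I * τ * x)) ξ = FT h (ξ - τ) := by
  unfold FT
  congr 1; ext x
  rw [mul_assoc, ← Complex.exp_add]
  push_cast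
  ring_nf

lemma integrable_modulate {h : ℝ → ℂ} (hh : Integrable h) (τ : ℝ) :
    Integrable fun x : ℝ => h x * Complex.exp (Complex.I * τ * x) :=
  hh.mul_bdd (c := 1) (by fun_prop)
    (Filter.Eventually.of_forall fun x => (norm_exp_I_mul τ x).le)

lemma FT_sub {f g : ℝ → ℂ} (hf : Integrable f) (hg : Integrable g) (ξ : ℝ) :
    FT (fun x => f x - g x) ξ = FT f ξ - FT g ξ := by
  unfold FT
  rw [← integral_sub (integrable_FT_integrand hf ξ) (integrable_FT_integrand hg ξ)]
  simp only [sub_mul]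

/-- Density before smoothing on the Fourier side: the high frequencies and the frequencies near
`0` and `τ` can be removed at an arbitrarily small cost in `L¹`. -/
lemma exists_cutoff {τ : ℝ} (hτ : 0 < τ) {f : ℝ → ℂ} (hf : Integrable f)
    (hneg : ∀ ξ : ℝ, ξ < 0 → FT f ξ = 0) (hfτ : FT f τ = 0) {ε : ℝ} (hε : 0 < ε) :
    ∃ g : ℝ → ℂ, Integrable g ∧ (∫ x, ‖f x - g x‖) < ε ∧ ∃ a M : ℝ, 0 < a ∧
      (∀ ξ ≤ a, FT g ξ = 0) ∧ (∀ ξ, |ξ - τ| ≤ a → FT g ξ = 0) ∧ ∀ ξ, M ≤ ξ → FT g ξ = 0 := by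
  obtain ⟨K, hK, hK1, hK0⟩ := exists_kernel
  have hf0 : FT f 0 = 0 := by
    have h1 : Tendsto (FT f) (𝓝[<] 0) (𝓝 (FT f 0)) :=
      ((continuous_FT hf).tendsto 0).mono_left nhdsWithin_le_nhds
    refine tendsto_nhds_unique h1 (tendsto_const_nhds.congr' ?_)
    filter_upwards [self_mem_nhdsWithin] with ξ hξ using (hneg ξ hξ).symm
  -- the frequency `τ` is moved to `0` by modulation
  let h : ℝ → ℂ := fun x => f x * Complex.exp (Complex.I * (-τ : ℝ) * x)
  have hh : Integrable h := integrable_modulate hf (-τ)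
  have hFh (ξ : ℝ) : FT h ξ = FT f (ξ + τ) := by
    have := FT_modulate f (-τ) ξ
    rwa [sub_neg_eq_add] at this
  have hh0 : FT h 0 = 0 := by rw [hFh, zero_add, hfτ]
  have t1 := (tendsto_dilConv hK hf).mono_left (nhdsWithin_le_nhds (s := Set.Ioi 0))
  have hK' : ∫ u, K u = 1 := by simpa [FT] using hK1 0 (by simp)
  simp only [hK', one_mul] at t1
  have t := (t1.add (tendsto_lowPart hK hf hf0)).add (tendsto_lowPart hK hh hh0)
  simp only [add_zero] at t
  have hpos : 0 < min 1 (min (1 / (τ + 1)) (τ / 3)) := by positivity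
  obtain ⟨δ, hδε, hδ0, hδ⟩ := ((t.eventually (gt_mem_nhds hε)).and (Ioo_mem_nhdsGT hpos)).exists
  simp only [lt_min_iff] at hδ
  obtain ⟨hδ1, hδτ, hδ3⟩ := hδ
  rw [lt_div_iff₀ (by positivity)] at hδτ
  let l : ℝ → ℂ := fun x => lowPart K h δ x * Complex.exp (Complex.I * τ * x)
  have hA := integrable_dilConv hK hf δ
  have hB := integrable_lowPart hK hf hδ0
  have hC := integrable_lowPart hK hh hδ0
  have hAB : Integrable fun x => dilConv K f δ x - lowPart K f δ x := hA.sub hB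
  have hAf : Integrable fun x => ‖dilConv K f δ x - f x‖ := (hA.sub hf).norm
  have hl : Integrable l := integrable_modulate hC τ
  have hFT (ξ : ℝ) : FT (fun x => dilConv K f δ x - lowPart K f δ x - l x) ξ =
      (FT K (δ * ξ) - FT K (ξ / δ) - FT K ((ξ - τ) / δ)) * FT f ξ := by
    rw [FT_sub hAB hl, FT_sub hA hB, FT_dilConv hK hf, FT_lowPart hK hf hδ0,
      FT_modulate, FT_lowPart hK hh hδ0, hFh, sub_add_cancel]
    ring
  have habs (y : ℝ) : |y / δ| = |y| / δ := by rw [abs_div, abs_of_pos hδ0]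
  have hz (y : ℝ) (hy : 2 * δ ≤ |y|) : FT K (y / δ) = 0 :=
    hK0 _ (by rw [habs, le_div_iff₀ hδ0]; exact hy)
  have ho (y : ℝ) (hy : |y| ≤ δ) : FT K (y / δ) = 1 :=
    hK1 _ (by rw [habs, div_le_one hδ0]; exact hy)
  have hm (y : ℝ) : |δ * y| = δ * |y| := by rw [abs_mul, abs_of_pos hδ0]
  refine ⟨fun x => dilConv K f δ x - lowPart K f δ x - l x, (hA.sub hB).sub hl, ?_,
    δ, 2 / δ + τ + 2 * δ, hδ0, fun ξ hξ => ?_, fun ξ hξ => ?_, fun ξ hξ => ?_⟩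
  · refine lt_of_le_of_lt ?_ hδε
    rw [← integral_add hAf hB.norm, ← integral_add (by exact hAf.add hB.norm) hC.norm]
    refine integral_mono (hf.sub ((hA.sub hB).sub hl)).norm ((hAf.add hB.norm).add hC.norm)
      fun x => ?_
    have e : ‖l x‖ = ‖lowPart K h δ x‖ := by rw [norm_mul, norm_exp_I_mul, mul_one]
    change ‖f x - (dilConv K f δ x - lowPart K f δ x - l x)‖ ≤
      ‖dilConv K f δ x - f x‖ + ‖lowPart K f δ x‖ + ‖lowPart K h δ x‖
    rw [← e, show f x - (dilConv K f δ x - lowPart K f δ x - l x) =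
      -(dilConv K f δ x - f x) + lowPart K f δ x + l x by ring]
    exact (norm_add₃_le).trans (by rw [norm_neg])
  · rw [hFT]
    rcases lt_or_ge ξ 0 with h0 | h0
    · rw [hneg ξ h0, mul_zero]
    · have ha : |ξ| ≤ δ := by rwa [abs_of_nonneg h0]
      rw [ho ξ ha, hK1 (δ * ξ) (by rw [hm]; nlinarith),
        hz (ξ - τ) (by rw [abs_of_nonpos] <;> linarith)]
      ring
  · rw [hFT]
    have hb := abs_le.1 hξ
    have h0 : 0 ≤ ξ := by linarith
    rw [ho _ hξ, hK1 (δ * ξ) (by rw [hm, abs_of_nonneg h0]; nlinarith),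
      hz ξ (by rw [abs_of_nonneg h0]; linarith)]
    ring
  · rw [hFT]
    have h2 : 0 < 2 / δ := by positivity
    have h0 : 0 ≤ ξ := by linarith
    have h3 : 2 ≤ δ * ξ := by
      have : 2 / δ ≤ ξ := by linarith
      rwa [div_le_iff₀' hδ0] at this
    rw [hK0 (δ * ξ) (by rw [hm, abs_of_nonneg h0]; exact h3),
      hz ξ (by rw [abs_of_nonneg h0]; linarith),
      hz (ξ - τ) (by rw [abs_of_nonneg] <;> linarith)]
    ring

/-- **Density of `H¹_{{0,τ},0}` in `H¹_{{τ}}`:** every `f ∈ H¹₊` with `f̂(τ) = 0` is the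
`L¹`-limit of functions whose Fourier transform is smooth, compactly supported in `[0,∞)`
and supported at positive distance from `{0, τ}`. -/
theorem H1_0tau0_dense_in_H1_tau (τ : ℝ) (hτ : 0 < τ) :
    ∀ f : ℝ → ℂ, Integrable f → (∀ ξ : ℝ, ξ < 0 → FT f ξ = 0) → FT f τ = 0 →
      ∀ ε : ℝ, 0 < ε →
        ∃ g : ℝ → ℂ, Integrable g ∧
          ContDiff ℝ (⊤ : ℕ∞) (FT g) ∧
          HasCompactSupport (FT g) ∧
          tsupport (FT g) ⊆ Set.Ici (0 : ℝ) ∧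
          (0 : ℝ) ∉ tsupport (FT g) ∧
          τ ∉ tsupport (FT g) ∧
          (∫ x : ℝ, ‖f x - g x‖) < ε := by
  intro f hf hneg hfτ ε hε
  obtain ⟨g, hg, hfg, a, M, ha, hlow, hmid, hhigh⟩ :=
    exists_cutoff hτ hf hneg hfτ (half_pos hε)
  obtain ⟨k, hk, hks, hgk, hkz⟩ := exists_smooth_FT hg (half_pos hε) (half_pos ha)
  have hsupp : tsupport (FT k) ⊆ Set.Icc (a / 2) (M + a / 2) ∩ {ξ | a / 2 ≤ |ξ - τ|} := by
    refine closure_minimal (fun ξ hξ => ?_)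
      (isClosed_Icc.inter (isClosed_le continuous_const (by fun_prop)))
    rw [Function.mem_support] at hξ
    refine ⟨⟨?_, ?_⟩, ?_⟩ <;> by_contra hc <;> refine hξ (hkz ξ fun s hs => ?_)
    · exact hlow s (by linarith [abs_le.1 hs])
    · exact hhigh s (by linarith [abs_le.1 hs])
    · refine hmid s ?_
      have hc : |ξ - τ| < a / 2 := not_le.1 hc
      linarith [abs_sub_le s ξ τ]
  refine ⟨k, hk, hks, ?_, fun ξ hξ => ?_, fun h0 => ?_, fun h0 => ?_, ?_⟩
  · exact isCompact_Icc.of_isClosed_subset (isClosed_tsupport _)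
      (hsupp.trans Set.inter_subset_left)
  · exact (half_pos ha).le.trans (hsupp hξ).1.1
  · exact absurd (hsupp h0).1.1 (by linarith)
  · have := (hsupp h0).2
    simp only [Set.mem_ofPred_eq, sub_self, abs_zero] at this
    linarith
  · calc ∫ x, ‖f x - k x‖ ≤ ∫ x, (‖f x - g x‖ + ‖g x - k x‖) :=
          integral_mono (hf.sub hk).norm ((hf.sub hg).norm.add (hg.sub hk).norm)
            fun x => norm_sub_le_norm_sub_add_norm_sub _ _ _
      _ = (∫ x, ‖f x - g x‖) + ∫ x, ‖g x - k x‖ :=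
          integral_add (hf.sub hg).norm (hg.sub hk).norm
      _ < ε := by linarith
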